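/- arXiv:2506.10266 — 9 statements merged into one kernel-verified Lean document; each statement's English description precedes it below -/
import Mathlib

section
/- Let D be a 2-(v,k,λ) design with replication number r and b blocks, where 2 < k < v−1 (D non-trivial). Then b ≥ v and k ≤ r (Fisher's inequality); moreover, if D is non-symmetric (b ≠ v), then b > v and k < r. -/
/-!
The incidence matrix `N` of a family of blocks covering every pair of points exactly `lam` times
satisfies `N * Nᵀ = diag (r_p - lam) + lam * J`, where `r_p` is the number of blocks through `p` and
`J` is the all-ones matrix. If no block is the whole point set, then `lam < r_p`: some block through
`p` misses a point `q`, so the `lam` blocks through both `p` and `q` are not all the blocks through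
`p`. Hence `N * Nᵀ` is positive definite and `N` has rank `v`, which gives `v ≤ b`. The double count
`b * k = v * r` turns this into `k ≤ r`, and a strict inequality into a strict one.
-/

/-- A 2-(v,k,λ) design on a finite point set `P`: a collection of `k`-element
subsets of `P` (blocks) such that every pair of distinct points lies in exactly
`lam` blocks (with `lam ≥ 1`). -/
structure TwoDesign (P : Type*) [Fintype P] [DecidableEq P] (v k lam : ℕ) where
  blocks : Finset (Finset P)
  card_points : Fintype.card P = v
  block_card : ∀ B ∈ blocks, B.card = k
  lam_pos : 0 < lam
  pair_blocks : ∀ p q : P, p ≠ q →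
    (blocks.filter fun B => p ∈ B ∧ q ∈ B).card = lam

open Finset Matrix

section IncidenceMatrix

variable {P ι : Type*} [DecidableEq P]

/-- The point-block incidence matrix of a family of blocks, whose rank is compared with the numbers
of points and of blocks. The columns are the block indices, so a repeated block gives equal columns.
-/
def incidenceMatrix (R : Type*) [Zero R] [One R] (B : ι → Finset P) : Matrix P ι R :=
  of fun p i => if p ∈ B i then 1 else 0

lemma incidenceMatrix_mul_transpose_apply [Fintype ι] {R : Type*} [NonAssocSemiring R]
    (B : ι → Finset P) (p q : P) :
    (incidenceMatrix R B * (incidenceMatrix R B)ᵀ) p q = #{i | p ∈ B i ∧ q ∈ B i} := by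
  simp [incidenceMatrix, mul_apply, ← ite_and, and_comm]

end IncidenceMatrix

/-- A family of blocks is pairwise balanced of index `lam` if any two distinct points lie in exactly
`lam` common blocks: the setting of the non-uniform Fisher inequality. The family is indexed, so
repeated blocks are allowed, and the blocks may have different sizes. -/
def IsPairwiseBalanced {P ι : Type*} [DecidableEq P] [Fintype ι] (B : ι → Finset P) (lam : ℕ) :
    Prop :=
  Pairwise fun p q => #{i | p ∈ B i ∧ q ∈ B i} = lam

namespace IsPairwiseBalanced

variable {P ι : Type*} [DecidableEq P] [Fintype ι] {B : ι → Finset P} {lam : ℕ}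

lemma incidenceMatrix_mul_transpose {R : Type*} [NonAssocRing R] (hB : IsPairwiseBalanced B lam) :
    incidenceMatrix R B * (incidenceMatrix R B)ᵀ =
      diagonal (fun p => (#{i | p ∈ B i} - lam : R)) + (lam : R) • vecMulVec 1 1 := by
  ext p q
  rw [incidenceMatrix_mul_transpose_apply]
  obtain rfl | hpq := eq_or_ne p q
  · simp
  · simp [hpq, hB hpq]

lemma lt_card_blocks_through [Fintype P] [Nontrivial P] (hB : IsPairwiseBalanced B lam)
    (hlam : 0 < lam) (hproper : ∀ i, B i ≠ univ) (p : P) : lam < #{i | p ∈ B i} := by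
  obtain ⟨p', hp'⟩ := exists_ne p
  obtain ⟨i, hi⟩ : ({i | p ∈ B i ∧ p' ∈ B i} : Finset ι).Nonempty := by
    rwa [← card_pos, hB hp'.symm]
  have hpi : p ∈ B i := (mem_filter_univ i |>.mp hi).1
  obtain ⟨q, hqi⟩ : ∃ q, q ∉ B i := by simpa [eq_univ_iff_forall] using hproper i
  have hpq : p ≠ q := ne_of_mem_of_not_mem hpi hqi
  rw [← hB hpq]
  refine card_lt_card (ssubset_iff_of_subset ?_ |>.mpr ⟨i, by simpa using hpi, by simp [hqi]⟩)
  exact monotone_filter_right _ fun _ _ h => h.1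

lemma posDef_incidenceMatrix_mul_transpose [Finite P] (hB : IsPairwiseBalanced B lam)
    (hdeg : ∀ p, lam < #{i | p ∈ B i}) :
    (incidenceMatrix ℝ B * (incidenceMatrix ℝ B)ᵀ).PosDef := by
  have hdiag : (diagonal fun p => (#{i | p ∈ B i} - lam : ℝ)).PosDef :=
    .diagonal fun p => sub_pos.mpr (mod_cast hdeg p)
  have hones : (vecMulVec 1 1 : Matrix P P ℝ).PosSemidef := by
    simpa using posSemidef_vecMulVec_self_star (1 : P → ℝ)
  rw [hB.incidenceMatrix_mul_transpose]
  exact hdiag.add_posSemidef (hones.smul lam.cast_nonneg)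

theorem card_points_le_card_blocks [Fintype P] [Nontrivial P] (hB : IsPairwiseBalanced B lam)
    (hlam : 0 < lam) (hproper : ∀ i, B i ≠ univ) : Fintype.card P ≤ Fintype.card ι := by
  have hpos := hB.posDef_incidenceMatrix_mul_transpose (hB.lt_card_blocks_through hlam hproper)
  calc Fintype.card P = (incidenceMatrix ℝ B * (incidenceMatrix ℝ B)ᵀ).rank :=
        (rank_of_isUnit _ hpos.isUnit).symm
    _ ≤ (incidenceMatrix ℝ B).rank := rank_mul_le_left _ _
    _ ≤ Fintype.card ι := rank_le_card_width _

end IsPairwiseBalanced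

namespace TwoDesign

variable {P : Type*} [Fintype P] [DecidableEq P] {v k lam r : ℕ}

lemma isPairwiseBalanced (D : TwoDesign P v k lam) :
    IsPairwiseBalanced (fun B : D.blocks => (B : Finset P)) lam := fun p q hpq => by
  refine .trans ?_ (D.pair_blocks p q hpq)
  rw [card_filter, card_filter]
  exact sum_coe_sort D.blocks fun B => if p ∈ B ∧ q ∈ B then 1 else 0

lemma card_blocks_mul (D : TwoDesign P v k lam) (hr : ∀ p : P, #{B ∈ D.blocks | p ∈ B} = r) :
    #D.blocks * k = v * r := by
  rw [← sum_const_nat D.block_card, sum_card hr, D.card_points]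

theorem le_card_blocks (D : TwoDesign P v k lam) (hk : 0 < k) (hkv : k < v) : v ≤ #D.blocks := by
  have : Nontrivial P := Fintype.one_lt_card_iff_nontrivial.mp (by rw [D.card_points]; omega)
  have hproper (B : D.blocks) : (B : Finset P) ≠ univ := fun hB =>
    hkv.ne <| by rw [← D.block_card B B.2, hB, card_univ, D.card_points]
  simpa [D.card_points] using
    D.isPairwiseBalanced.card_points_le_card_blocks D.lam_pos hproper

end TwoDesign

theorem stmt_1_general {P : Type*} [Fintype P] [DecidableEq P] {v k lam r b : ℕ}
    (D : TwoDesign P v k lam) (hk : 0 < k) (hkv : k < v)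
    (hr : ∀ p : P, #{B ∈ D.blocks | p ∈ B} = r) (hb : #D.blocks = b) :
    (v ≤ b ∧ k ≤ r) ∧ (b ≠ v → v < b ∧ k < r) := by
  subst hb
  have hbk : #D.blocks * k = v * r := D.card_blocks_mul hr
  have hv : v ≤ #D.blocks := D.le_card_blocks hk hkv
  refine ⟨⟨hv, ?_⟩, fun hne => ?_⟩
  · exact Nat.le_of_mul_le_mul_left (hbk ▸ Nat.mul_le_mul_right k hv) (hk.trans hkv)
  · have hlt : v < #D.blocks := hv.lt_of_ne' hne
    exact ⟨hlt, Nat.lt_of_mul_lt_mul_left (hbk ▸ Nat.mul_lt_mul_of_pos_right hlt hk)⟩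

/-- Fisher's inequality, with the strict version in the non-symmetric case. -/
theorem stmt_1 {P : Type*} [Fintype P] [DecidableEq P] {v k lam r b : ℕ}
    (D : TwoDesign P v k lam)
    (hnt : 2 < k ∧ k < v - 1)
    (hr : ∀ p : P, (D.blocks.filter fun B => p ∈ B).card = r)
    (hb : D.blocks.card = b) :
    (v ≤ b ∧ k ≤ r) ∧ (b ≠ v → v < b ∧ k < r) :=
  stmt_1_general D (by omega) (by omega) hr hb
end

section
/- Let D be a non-trivial 2-(v,k,λ) design, let G be a flag-transitive group of automorphisms of D, and let α be a point of D. Then |G_α|³ > λ·|G|. -/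
open scoped Finset Pointwise

section Fisher

variable {α β : Type*} [Fintype α] {r : α → β → Prop} [∀ a b, Decidable (r a b)]
  {t : Finset β} {l : ℕ}

theorem sum_sq_sum_filter_eq_sum_card_mul {R : Type*} [CommSemiring R] (c : α → R) :
    ∑ b ∈ t, (∑ a with r a b, c a) ^ 2
      = ∑ a, ∑ a', (#{b ∈ t | r a b ∧ r a' b} : R) * (c a * c a') := by
  have sq_eq (b : β) : (∑ a with r a b, c a) ^ 2
      = ∑ a, ∑ a', if r a b ∧ r a' b then c a * c a' else 0 := by
    simp only [sq, Finset.sum_filter, Fintype.sum_mul_sum, ite_zero_mul_ite_zero]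
  simp only [sq_eq]
  rw [Finset.sum_comm]
  refine Finset.sum_congr rfl fun a _ => ?_
  rw [Finset.sum_comm]
  refine Finset.sum_congr rfl fun a' _ => ?_
  rw [← Finset.sum_filter, Finset.sum_const, nsmul_eq_mul]

theorem sum_sq_sum_filter_of_pairwise_card_eq {R : Type*} [CommRing R]
    (hpair : Pairwise fun a a' => #{b ∈ t | r a b ∧ r a' b} = l) (c : α → R) :
    ∑ b ∈ t, (∑ a with r a b, c a) ^ 2
      = l * (∑ a, c a) ^ 2 + ∑ a, ((#{b ∈ t | r a b} : R) - l) * c a ^ 2 := by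
  classical
  have card_pair (a a' : α) : (#{b ∈ t | r a b ∧ r a' b} : R)
      = l + if a = a' then (#{b ∈ t | r a b} : R) - l else 0 := by
    obtain rfl | hne := eq_or_ne a a'
    · simp only [and_self, if_true, add_sub_cancel]
    · rw [hpair hne, if_neg hne, add_zero]
  rw [sum_sq_sum_filter_eq_sum_card_mul, sq, Fintype.sum_mul_sum]
  simp only [card_pair, add_mul, Finset.sum_add_distrib, ite_mul, zero_mul, Finset.sum_ite_eq,
    Finset.mem_univ, if_true, ← Finset.mul_sum, sq]

theorem eq_zero_of_forall_sum_filter_eq_zero {R : Type*} [CommRing R] [LinearOrder R]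
    [IsStrictOrderedRing R]
    (hpair : Pairwise fun a a' => #{b ∈ t | r a b ∧ r a' b} = l)
    (hdeg : ∀ a, l < #{b ∈ t | r a b}) {c : α → R} (hc : ∀ b ∈ t, ∑ a with r a b, c a = 0) :
    c = 0 := by
  have coeff_pos (a : α) : 0 < (#{b ∈ t | r a b} : R) - l :=
    sub_pos.2 (Nat.cast_lt.2 (hdeg a))
  have term_nonneg (a : α) : 0 ≤ ((#{b ∈ t | r a b} : R) - l) * c a ^ 2 :=
    mul_nonneg (coeff_pos a).le (sq_nonneg _)
  have form_eq_zero :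
      l * (∑ a, c a) ^ 2 + ∑ a, ((#{b ∈ t | r a b} : R) - l) * c a ^ 2 = 0 := by
    rw [← sum_sq_sum_filter_of_pairwise_card_eq hpair]
    exact Finset.sum_eq_zero fun b hb => by rw [hc b hb, zero_pow two_ne_zero]
  have diagonal_eq_zero : ∑ a, ((#{b ∈ t | r a b} : R) - l) * c a ^ 2 = 0 :=
    ((add_eq_zero_iff_of_nonneg (by positivity)
      (Finset.sum_nonneg fun a _ => term_nonneg a)).1 form_eq_zero).2
  funext a
  have term_eq_zero :=
    (Finset.sum_eq_zero_iff_of_nonneg fun a _ => term_nonneg a).1 diagonal_eq_zero a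
      (Finset.mem_univ a)
  exact (pow_eq_zero_iff two_ne_zero).1
    ((mul_eq_zero.1 term_eq_zero).resolve_left (coeff_pos a).ne')

theorem fisher_inequality (hpair : Pairwise fun a a' => #{b ∈ t | r a b ∧ r a' b} = l)
    (hdeg : ∀ a, l < #{b ∈ t | r a b}) :
    Fintype.card α ≤ #t := by
  let sumOver : (α → ℚ) →ₗ[ℚ] (t → ℚ) := LinearMap.pi fun b => ∑ a with r a b, LinearMap.proj a
  have sumOver_injective : Function.Injective sumOver := by
    refine (injective_iff_map_eq_zero sumOver).2 fun c hc =>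
      eq_zero_of_forall_sum_filter_eq_zero hpair hdeg fun b hb => ?_
    simpa [sumOver] using congrFun hc ⟨b, hb⟩
  simpa only [Fintype.card_coe] using card_le_of_injective ℚ sumOver sumOver_injective

end Fisher

namespace TwoDesign

variable {P : Type*} [Fintype P] [DecidableEq P] {v k lam : ℕ} (D : TwoDesign P v k lam)

/-- The replication number `r`, as a function of the point: the number of blocks through `p`. -/
def replication (p : P) : ℕ :=
  #{B ∈ D.blocks | p ∈ B}

theorem replication_mul_pred (p : P) : D.replication p * (k - 1) = lam * (v - 1) := by
  have card_filter (q : P) (hq : q ∈ Finset.univ.erase p) :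
      #{B ∈ {B ∈ D.blocks | p ∈ B} | q ∈ B} = lam := by
    rw [Finset.filter_filter]
    exact D.pair_blocks p q (Finset.ne_of_mem_erase hq).symm
  have card_inter (B : Finset P) (hB : B ∈ ({B ∈ D.blocks | p ∈ B} : Finset _)) :
      #(Finset.univ.erase p ∩ B) = k - 1 := by
    obtain ⟨hB, hpB⟩ := Finset.mem_filter.1 hB
    rw [Finset.erase_inter, Finset.univ_inter, Finset.card_erase_of_mem hpB, D.block_card B hB]
  calc D.replication p * (k - 1)
      = ∑ B ∈ D.blocks with p ∈ B, #(Finset.univ.erase p ∩ B) :=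
        (Finset.sum_const_nat card_inter).symm
    _ = #(Finset.univ.erase p) * lam := Finset.sum_card_inter card_filter
    _ = lam * (v - 1) := by
        rw [Finset.card_erase_of_mem (Finset.mem_univ p), Finset.card_univ, D.card_points,
          mul_comm]

theorem replication_eq (hk : 1 < k) (p q : P) : D.replication p = D.replication q :=
  Nat.eq_of_mul_eq_mul_right (Nat.sub_pos_of_lt hk)
    ((D.replication_mul_pred p).trans (D.replication_mul_pred q).symm)

theorem card_blocks_mul_s2 (hk : 1 < k) (p : P) : #D.blocks * k = v * D.replication p := by
  rw [← Finset.sum_const_nat D.block_card, Finset.sum_card fun q => D.replication_eq hk q p,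
    D.card_points]

theorem lam_lt_replication (hk : 1 < k) (hkv : k < v) (p : P) : lam < D.replication p := by
  refine lt_of_mul_lt_mul_right (a := k - 1) ?_ (Nat.zero_le _)
  rw [D.replication_mul_pred p]
  exact Nat.mul_lt_mul_of_pos_left (by omega) D.lam_pos

theorem card_points_le_card_blocks (hk : 1 < k) (hkv : k < v) : v ≤ #D.blocks :=
  D.card_points.ge.trans (fisher_inequality D.pair_blocks (D.lam_lt_replication hk hkv))

theorem block_size_le_replication (hk : 1 < k) (hkv : k < v) (p : P) : k ≤ D.replication p := by
  have flag_count_le : v * k ≤ v * D.replication p := by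
    rw [← D.card_blocks_mul_s2 hk p]
    exact Nat.mul_le_mul_right k (D.card_points_le_card_blocks hk hkv)
  exact Nat.le_of_mul_le_mul_left flag_count_le (Nat.zero_lt_of_lt hkv)

theorem lam_mul_lt_replication_sq (hk : 1 < k) (hkv : k < v) (p : P) :
    lam * v < D.replication p ^ 2 := by
  have v_eq : v = v - 1 + 1 := by omega
  have k_eq : k = k - 1 + 1 := by omega
  calc lam * v = lam * (v - 1) + lam := by rw [← Nat.mul_add_one, ← v_eq]
    _ < lam * (v - 1) + D.replication p :=
        Nat.add_lt_add_left (D.lam_lt_replication hk hkv p) _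
    _ = D.replication p * k := by
        rw [← D.replication_mul_pred p, ← Nat.mul_add_one, ← k_eq]
    _ ≤ D.replication p ^ 2 := by
        rw [sq]
        exact Nat.mul_le_mul_left _ (D.block_size_le_replication hk hkv p)

end TwoDesign

theorem card_le_natCard_of_forall_exists_smul_eq {M X : Type*} [SMul M X] [Finite M]
    {s : Finset X} (hs : ∀ x ∈ s, ∀ y ∈ s, ∃ m : M, m • x = y) : #s ≤ Nat.card M := by
  obtain rfl | ⟨x, hx⟩ := s.eq_empty_or_nonempty
  · exact Nat.zero_le _
  have subset_orbit : (s : Set X) ⊆ Set.range fun m : M => m • x := hs x hx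
  calc #s = (s : Set X).ncard := (Set.ncard_coe_finset s).symm
    _ ≤ (Set.range fun m : M => m • x).ncard := Set.ncard_le_ncard subset_orbit
    _ ≤ Nat.card M := Finite.card_range_le _

theorem natCard_le_natCard_mul_natCard_stabilizer (G : Type*) {X : Type*} [Group G]
    [MulAction G X] [Finite X] (x : X) :
    Nat.card G ≤ Nat.card X * Nat.card (MulAction.stabilizer G x) := by
  rw [← (MulAction.stabilizer G x).index_mul_card, MulAction.index_stabilizer]
  exact Nat.mul_le_mul_right _ (Set.ncard_le_card _)

theorem stmt_2_general {P : Type*} [Fintype P] [DecidableEq P] {v k lam : ℕ}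
    (D : TwoDesign P v k lam) (hk : 1 < k) (hkv : k < v)
    (G : Type*) [Group G] [Finite G] [MulAction G P] (α : P)
    (htrans : ∀ B₁ ∈ D.blocks, ∀ B₂ ∈ D.blocks, α ∈ B₁ → α ∈ B₂ →
      ∃ g ∈ MulAction.stabilizer G α, g • B₁ = B₂) :
    lam * Nat.card G < Nat.card (MulAction.stabilizer G α) ^ 3 := by
  set s := Nat.card (MulAction.stabilizer G α)
  have s_pos : 0 < s := Nat.card_pos
  have replication_le : D.replication α ≤ s := by
    refine card_le_natCard_of_forall_exists_smul_eq fun B₁ hB₁ B₂ hB₂ => ?_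
    obtain ⟨hB₁, hα₁⟩ := Finset.mem_filter.1 hB₁
    obtain ⟨hB₂, hα₂⟩ := Finset.mem_filter.1 hB₂
    obtain ⟨g, hg, hgB⟩ := htrans B₁ hB₁ B₂ hB₂ hα₁ hα₂
    exact ⟨⟨g, hg⟩, hgB⟩
  have card_group_le : Nat.card G ≤ v * s := by
    rw [← D.card_points, ← Nat.card_eq_fintype_card]
    exact natCard_le_natCard_mul_natCard_stabilizer G α
  calc lam * Nat.card G ≤ lam * (v * s) := Nat.mul_le_mul_left _ card_group_le
    _ = lam * v * s := (mul_assoc _ _ _).symm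
    _ < D.replication α ^ 2 * s :=
        Nat.mul_lt_mul_of_pos_right (D.lam_mul_lt_replication_sq hk hkv α) s_pos
    _ ≤ s ^ 2 * s := by gcongr
    _ = s ^ 3 := (pow_succ s 2).symm

/-- If `G` is a flag-transitive group of automorphisms of a non-trivial
2-(v,k,λ) design, then `|G_α|³ > λ·|G|` for every point `α`. -/
theorem stmt_2 {P : Type*} [Fintype P] [DecidableEq P] {v k lam : ℕ}
    (D : TwoDesign P v k lam)
    (hnt : 2 < k ∧ k < v - 1)
    (G : Type*) [Group G] [Fintype G] [MulAction G P]
    (hact : ∀ (g : G), ∀ B ∈ D.blocks, B.image (fun p => g • p) ∈ D.blocks)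
    (hflag : ∀ (p₁ p₂ : P) (B₁ B₂ : Finset P), B₁ ∈ D.blocks → B₂ ∈ D.blocks →
      p₁ ∈ B₁ → p₂ ∈ B₂ → ∃ g : G, g • p₁ = p₂ ∧ B₁.image (fun p => g • p) = B₂)
    (α : P) :
    lam * Nat.card G < (Nat.card (MulAction.stabilizer G α)) ^ 3 :=
  stmt_2_general D (by omega) (by omega) G α fun B₁ hB₁ B₂ hB₂ => hflag α α B₁ B₂ hB₁ hB₂
end

section
/- Let D be a non-trivial 2-(v,k,λ) design with replication number r, let G be a flag-transitive group of automorphisms of D, and let α be a point of D. Then r divides λ·gcd(v−1, |G_α|). -/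
section

open Finset MulAction
open scoped Pointwise

theorem ncard_orbit_dvd_natCard {G X : Type*} [Group G] [MulAction G X] (x : X) :
    (orbit G x).ncard ∣ Nat.card G :=
  index_stabilizer G x ▸ (stabilizer G x).index_dvd_card

variable {P : Type*} [Fintype P] [DecidableEq P] {v k lam : ℕ}

namespace TwoDesign

/-- The blocks of a design incident with the point `α`. Their number is the replication number. -/
def blocksThrough (D : TwoDesign P v k lam) (α : P) : Finset (Finset P) :=
  {B ∈ D.blocks | α ∈ B}

variable {D : TwoDesign P v k lam} {α : P}

theorem mem_blocksThrough {B : Finset P} : B ∈ D.blocksThrough α ↔ B ∈ D.blocks ∧ α ∈ B :=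
  mem_filter

theorem card_filter_mem_blocksThrough {q : P} (hq : q ≠ α) :
    #{B ∈ D.blocksThrough α | q ∈ B} = lam := by
  rw [blocksThrough, filter_filter, D.pair_blocks α q hq.symm]

theorem blocksThrough_nonempty (D : TwoDesign P v k lam) (hv : 1 < v) (α : P) :
    (D.blocksThrough α).Nonempty := by
  obtain ⟨q, hq⟩ := Fintype.exists_ne_of_one_lt_card (D.card_points.symm ▸ hv) α
  have hpos : 0 < #{B ∈ D.blocksThrough α | q ∈ B} :=
    (card_filter_mem_blocksThrough hq).symm ▸ D.lam_pos
  exact (card_pos.1 hpos).mono (filter_subset _ _)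

theorem card_blocksThrough_mul_sub_one (D : TwoDesign P v k lam) (α : P) :
    #(D.blocksThrough α) * (k - 1) = lam * (v - 1) := by
  have card_points_ne : #(univ.erase α) = v - 1 := by
    rw [card_erase_of_mem (mem_univ α), card_univ, D.card_points]
  have card_points_on_block : ∀ B ∈ D.blocksThrough α, #{q ∈ univ.erase α | q ∈ B} = k - 1 := by
    intro B hB
    obtain ⟨hB, hα⟩ := mem_blocksThrough.1 hB
    rw [filter_erase, filter_univ_mem, card_erase_of_mem hα, D.block_card B hB]
  have double_count : #(univ.erase α) * lam = #(D.blocksThrough α) * (k - 1) :=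
    card_mul_eq_card_mul (fun q B ↦ q ∈ B)
      (fun _ hq ↦ card_filter_mem_blocksThrough (ne_of_mem_erase hq)) card_points_on_block
  rw [← double_count, card_points_ne, mul_comm]

theorem orbit_stabilizer_eq_blocksThrough {G : Type*} [Group G] [MulAction G P]
    (hact : ∀ g : G, ∀ B ∈ D.blocks, g • B ∈ D.blocks)
    (htrans : ∀ B ∈ D.blocksThrough α, ∀ C ∈ D.blocksThrough α, ∃ g ∈ stabilizer G α, g • B = C)
    {B : Finset P} (hB : B ∈ D.blocksThrough α) :
    orbit (stabilizer G α) B = D.blocksThrough α := by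
  ext C
  constructor
  · rintro ⟨⟨g, hg⟩, rfl⟩
    obtain ⟨hB, hα⟩ := mem_blocksThrough.1 hB
    exact mem_blocksThrough.2 ⟨hact g B hB, mem_image.2 ⟨α, hα, hg⟩⟩
  · intro hC
    obtain ⟨g, hg, hgB⟩ := htrans B hB C hC
    exact ⟨⟨g, hg⟩, hgB⟩

end TwoDesign

theorem stmt_3_general (D : TwoDesign P v k lam) (hv : 1 < v) {G : Type*} [Group G] [Finite G]
    [MulAction G P] {α : P} (hact : ∀ g : G, ∀ B ∈ D.blocks, g • B ∈ D.blocks)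
    (htrans : ∀ B ∈ D.blocksThrough α, ∀ C ∈ D.blocksThrough α,
      ∃ g ∈ stabilizer G α, g • B = C) :
    #(D.blocksThrough α) ∣ lam * Nat.gcd (v - 1) (Nat.card (stabilizer G α)) := by
  have dvd_points : #(D.blocksThrough α) ∣ lam * (v - 1) :=
    ⟨k - 1, (D.card_blocksThrough_mul_sub_one α).symm⟩
  have dvd_stabilizer : #(D.blocksThrough α) ∣ Nat.card (stabilizer G α) := by
    obtain ⟨B, hB⟩ := D.blocksThrough_nonempty hv α
    rw [← Set.ncard_coe_finset, ← TwoDesign.orbit_stabilizer_eq_blocksThrough hact htrans hB]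
    exact ncard_orbit_dvd_natCard B
  rw [← Nat.gcd_mul_left]
  exact Nat.dvd_gcd dvd_points (dvd_stabilizer.mul_left lam)

end

/-- If `G` is a flag-transitive group of automorphisms of a non-trivial
2-(v,k,λ) design with replication number `r`, then `r ∣ λ·gcd(v−1, |G_α|)`. -/
theorem stmt_3 {P : Type*} [Fintype P] [DecidableEq P] {v k lam r : ℕ}
    (D : TwoDesign P v k lam)
    (hnt : 2 < k ∧ k < v - 1)
    (hr : ∀ p : P, (D.blocks.filter fun B => p ∈ B).card = r)
    (G : Type*) [Group G] [Fintype G] [MulAction G P]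
    (hact : ∀ (g : G), ∀ B ∈ D.blocks, B.image (fun p => g • p) ∈ D.blocks)
    (hflag : ∀ (p₁ p₂ : P) (B₁ B₂ : Finset P), B₁ ∈ D.blocks → B₂ ∈ D.blocks →
      p₁ ∈ B₁ → p₂ ∈ B₂ → ∃ g : G, g • p₁ = p₂ ∧ B₁.image (fun p => g • p) = B₂)
    (α : P) :
    r ∣ lam * Nat.gcd (v - 1) (Nat.card (MulAction.stabilizer G α)) := by
  rw [← hr α]
  exact stmt_3_general D (by omega) hact fun B hB C hC ↦
    have ⟨hB, hαB⟩ := TwoDesign.mem_blocksThrough.1 hB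
    have ⟨hC, hαC⟩ := TwoDesign.mem_blocksThrough.1 hC
    hflag α α B C hB hC hαB hαC
end

section
/- Let D be a non-trivial 2-(v,k,λ) design with replication number r, let G be a flag-transitive group of automorphisms of D, let α be a point of D, and let d be any non-trivial subdegree of G (the length of an orbit of G_α on the points other than α). Then r divides λ·d; in particular r/gcd(r,λ) divides gcd(v−1, d). -/
theorem div_gcd_dvd_iff_dvd_mul {r l n : ℕ} (h : 0 < r.gcd l) : r / r.gcd l ∣ n ↔ r ∣ l * n := by
  rw [Nat.div_dvd_iff_dvd_mul (Nat.gcd_dvd_left r l) h, Nat.dvd_gcd_mul_iff_dvd_mul]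

section Action

open scoped Finset Pointwise

variable {G P : Type*} [Group G] [MulAction G P]

theorem notMem_orbit_stabilizer_of_ne {α β : P} (h : β ≠ α) :
    α ∉ MulAction.orbit (MulAction.stabilizer G α) β := by
  have hα : α ∈ MulAction.fixedPoints (MulAction.stabilizer G α) P := fun g => g.2
  exact fun hmem => h (MulAction.mem_fixedPoints'.1 hα β (MulAction.mem_orbit_symm.1 hmem))

theorem card_inter_smul_of_smul_eq [DecidableEq P] {g : G} {S : Finset P} (hS : g • S = S)
    (B : Finset P) : #(S ∩ g • B) = #(S ∩ B) :=
  calc #(S ∩ g • B) = #(g • (S ∩ B)) := by rw [Finset.smul_finset_inter, hS]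
    _ = #(S ∩ B) := Finset.card_smul_finset g _

end Action

namespace TwoDesign

open scoped Finset Pointwise

variable {P : Type*} [Fintype P] [DecidableEq P] {v k lam : ℕ} (D : TwoDesign P v k lam)
  {α : P} {S : Finset P}

theorem exists_block_mem_mem {β : P} (h : α ≠ β) : ∃ B ∈ D.blocks, α ∈ B ∧ β ∈ B := by
  have hpos : 0 < #{B ∈ D.blocks | α ∈ B ∧ β ∈ B} := D.lam_pos.trans_eq (D.pair_blocks α β h).symm
  simpa only [Finset.card_pos, Finset.filter_nonempty_iff] using hpos

theorem card_blocks_mem_mul_eq_mul_card {c : ℕ} (hS : α ∉ S)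
    (hc : ∀ B ∈ D.blocks, α ∈ B → #(S ∩ B) = c) :
    #{B ∈ D.blocks | α ∈ B} * c = lam * #S := by
  have hlam : ∀ γ ∈ S, #{B ∈ {B ∈ D.blocks | α ∈ B} | γ ∈ B} = lam := fun γ hγ => by
    rw [Finset.filter_filter]
    exact D.pair_blocks α γ (ne_of_mem_of_not_mem hγ hS).symm
  calc #{B ∈ D.blocks | α ∈ B} * c = ∑ B ∈ D.blocks with α ∈ B, #(S ∩ B) :=
        (Finset.sum_const_nat (by simpa only [Finset.mem_filter, and_imp] using hc)).symm
    _ = #S * lam := Finset.sum_card_inter hlam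
    _ = lam * #S := mul_comm _ _

theorem card_blocks_mem_mul_pred (α : P) :
    #{B ∈ D.blocks | α ∈ B} * (k - 1) = lam * (v - 1) := by
  have hcount : #{B ∈ D.blocks | α ∈ B} * (k - 1) = lam * #(Finset.univ.erase α) :=
    D.card_blocks_mem_mul_eq_mul_card (Finset.notMem_erase α _) fun B hB hαB => by
      rw [Finset.erase_inter, Finset.univ_inter, Finset.card_erase_of_mem hαB, D.block_card B hB]
  rwa [Finset.card_erase_of_mem (Finset.mem_univ α), Finset.card_univ, D.card_points] at hcount

theorem card_blocks_mem_dvd_mul_card_of_smul_eq {H : Type*} [Group H] [MulAction H P]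
    (htrans : ∀ B₁ ∈ D.blocks, ∀ B₂ ∈ D.blocks, α ∈ B₁ → α ∈ B₂ → ∃ h : H, h • B₁ = B₂)
    (hS : α ∉ S) (hinv : ∀ h : H, h • S = S) :
    #{B ∈ D.blocks | α ∈ B} ∣ lam * #S := by
  obtain rfl | ⟨γ, hγ⟩ := S.eq_empty_or_nonempty
  · simp
  obtain ⟨B₀, hB₀, hαB₀, -⟩ := D.exists_block_mem_mem (ne_of_mem_of_not_mem hγ hS).symm
  have hconst : ∀ B ∈ D.blocks, α ∈ B → #(S ∩ B) = #(S ∩ B₀) := fun B hB hαB => by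
    obtain ⟨h, rfl⟩ := htrans B₀ hB₀ B hB hαB₀ hαB
    exact card_inter_smul_of_smul_eq (hinv h) B₀
  exact ⟨_, (D.card_blocks_mem_mul_eq_mul_card hS hconst).symm⟩

theorem card_blocks_mem_dvd_mul_card_orbit {H : Type*} [Group H] [MulAction H P]
    (htrans : ∀ B₁ ∈ D.blocks, ∀ B₂ ∈ D.blocks, α ∈ B₁ → α ∈ B₂ → ∃ h : H, h • B₁ = B₂)
    {β : P} (hβ : α ∉ MulAction.orbit H β) :
    #{B ∈ D.blocks | α ∈ B} ∣ lam * Nat.card (MulAction.orbit H β) := by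
  classical
  have hinv (h : H) : h • (MulAction.orbit H β).toFinset = (MulAction.orbit H β).toFinset :=
    Finset.coe_injective <| by
      rw [Finset.coe_smul_finset, Set.coe_toFinset, MulAction.smul_orbit]
  rw [Nat.card_eq_card_toFinset]
  exact D.card_blocks_mem_dvd_mul_card_of_smul_eq htrans (by rwa [Set.mem_toFinset]) hinv

end TwoDesign

theorem stmt_4_general {P : Type*} [Fintype P] [DecidableEq P] {v k lam r d : ℕ}
    (D : TwoDesign P v k lam) {G : Type*} [Group G] [MulAction G P] {α β : P}
    (hr : (D.blocks.filter fun B => α ∈ B).card = r)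
    (htrans : ∀ B₁ ∈ D.blocks, ∀ B₂ ∈ D.blocks, α ∈ B₁ → α ∈ B₂ →
      ∃ g : G, g • α = α ∧ B₁.image (fun p => g • p) = B₂)
    (hβ : β ≠ α) (hd : d = Nat.card (MulAction.orbit (MulAction.stabilizer G α) β)) :
    r ∣ lam * d ∧ (r / Nat.gcd r lam) ∣ Nat.gcd (v - 1) d := by
  have hrd : r ∣ lam * d := by
    rw [← hr, hd]
    exact D.card_blocks_mem_dvd_mul_card_orbit
      (fun B₁ hB₁ B₂ hB₂ hα₁ hα₂ =>
        let ⟨g, hgα, hgB⟩ := htrans B₁ hB₁ B₂ hB₂ hα₁ hα₂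
        ⟨⟨g, hgα⟩, hgB⟩)
      (notMem_orbit_stabilizer_of_ne hβ)
  have hrv : r ∣ lam * (v - 1) := ⟨k - 1, by rw [← hr, D.card_blocks_mem_mul_pred]⟩
  have hgcd : 0 < r.gcd lam := Nat.gcd_pos_of_pos_right r D.lam_pos
  exact ⟨hrd, Nat.dvd_gcd ((div_gcd_dvd_iff_dvd_mul hgcd).2 hrv)
    ((div_gcd_dvd_iff_dvd_mul hgcd).2 hrd)⟩

/-- If `G` is a flag-transitive group of automorphisms of a non-trivial
2-(v,k,λ) design with replication number `r`, and `d` is a non-trivial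
subdegree of `G` (the length of an orbit of `G_α` on the points other than
`α`), then `r ∣ λ·d`; in particular `r/gcd(r,λ)` divides `gcd(v−1, d)`. -/
theorem stmt_4 {P : Type*} [Fintype P] [DecidableEq P] {v k lam r d : ℕ}
    (D : TwoDesign P v k lam)
    (hnt : 2 < k ∧ k < v - 1)
    (hr : ∀ p : P, (D.blocks.filter fun B => p ∈ B).card = r)
    (G : Type*) [Group G] [Fintype G] [MulAction G P]
    (hact : ∀ (g : G), ∀ B ∈ D.blocks, B.image (fun p => g • p) ∈ D.blocks)
    (hflag : ∀ (p₁ p₂ : P) (B₁ B₂ : Finset P), B₁ ∈ D.blocks → B₂ ∈ D.blocks →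
      p₁ ∈ B₁ → p₂ ∈ B₂ → ∃ g : G, g • p₁ = p₂ ∧ B₁.image (fun p => g • p) = B₂)
    (α β : P) (hβ : β ≠ α)
    (hd : d = Nat.card (MulAction.orbit (MulAction.stabilizer G α) β)) :
    r ∣ lam * d ∧ (r / Nat.gcd r lam) ∣ Nat.gcd (v - 1) d :=
  stmt_4_general D (hr α) (fun B₁ hB₁ B₂ hB₂ => hflag α α B₁ B₂ hB₁ hB₂) hβ hd
end

section
/- Let D be a non-trivial quasi-symmetric 2-(v,k,λ) design with block intersection numbers x = 0 and y ≥ 2, with replication number r. Then (y−1)(r−1) = (k−1)(λ−1). -/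
/-- A family of blocks is quasi-symmetric with block intersection numbers
`0` and `y` if any two distinct blocks meet in either `0` or `y` points,
and both intersection sizes actually occur. -/
def QuasiSymmetricZero {P : Type*} [DecidableEq P]
    (blocks : Finset (Finset P)) (y : ℕ) : Prop :=
  (∀ B₁ ∈ blocks, ∀ B₂ ∈ blocks, B₁ ≠ B₂ →
    (B₁ ∩ B₂).card = 0 ∨ (B₁ ∩ B₂).card = y) ∧
  (∃ B₁ ∈ blocks, ∃ B₂ ∈ blocks, B₁ ≠ B₂ ∧ (B₁ ∩ B₂).card = 0) ∧
  (∃ B₁ ∈ blocks, ∃ B₂ ∈ blocks, B₁ ≠ B₂ ∧ (B₁ ∩ B₂).card = y)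

/-! Fix a block `B` and a point `p ∈ B`, and count in two ways the pairs `(C, q)` with `C ≠ B` a
block through `p` and `q ≠ p` a point of `B ∩ C`. Each of the `r - 1` blocks `C` meets `B` in `p`,
hence in exactly `y` points, and so contributes `y - 1` pairs. Each of the `k - 1` points `q` lies
together with `p` in `λ` blocks, one of which is `B`, and so contributes `λ - 1` pairs. -/

section Flags

open Finset

variable {P : Type*} [DecidableEq P] {𝓑 : Finset (Finset P)} {B : Finset P} {p : P}

theorem QuasiSymmetricZero.card_inter_eq {C : Finset P} {y : ℕ} (h : QuasiSymmetricZero 𝓑 y)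
    (hB : B ∈ 𝓑) (hC : C ∈ 𝓑) (hBC : B ≠ C) (hpB : p ∈ B) (hpC : p ∈ C) : #(B ∩ C) = y :=
  (h.1 B hB C hC hBC).resolve_left (card_ne_zero_of_mem (mem_inter.mpr ⟨hpB, hpC⟩))

theorem sum_card_inter_sub_one_eq_sum_card_filter_sub_one (hB : B ∈ 𝓑) (hp : p ∈ B) :
    ∑ C ∈ {C ∈ 𝓑 | p ∈ C}.erase B, (#(B ∩ C) - 1) =
      ∑ q ∈ B.erase p, (#{C ∈ 𝓑 | p ∈ C ∧ q ∈ C} - 1) := by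
  have points_on_block : ∀ C ∈ {C ∈ 𝓑 | p ∈ C}.erase B,
      #(B ∩ C) - 1 = #{q ∈ B.erase p | q ∈ C} := by
    intro C hC
    have hpC : p ∈ C := (mem_filter.mp (mem_of_mem_erase hC)).2
    rw [filter_erase, filter_mem_eq_inter, card_erase_of_mem (mem_inter.mpr ⟨hp, hpC⟩)]
  have blocks_through_point : ∀ q ∈ B.erase p,
      #{C ∈ 𝓑 | p ∈ C ∧ q ∈ C} - 1 = #{C ∈ {C ∈ 𝓑 | p ∈ C}.erase B | q ∈ C} := by
    intro q hq
    have hBpq : B ∈ {C ∈ 𝓑 | p ∈ C ∧ q ∈ C} := mem_filter.mpr ⟨hB, hp, mem_of_mem_erase hq⟩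
    rw [filter_erase, filter_filter, card_erase_of_mem hBpq]
  rw [sum_congr rfl points_on_block, sum_congr rfl blocks_through_point]
  exact sum_card_bipartiteAbove_eq_sum_card_bipartiteBelow fun C q ↦ q ∈ C

theorem stmt_5_general {lam y : ℕ} (hB : B ∈ 𝓑) (hp : p ∈ B)
    (hpair : ∀ q ∈ B, q ≠ p → #{C ∈ 𝓑 | p ∈ C ∧ q ∈ C} = lam)
    (hinter : ∀ C ∈ 𝓑, p ∈ C → C ≠ B → #(B ∩ C) = y) :
    (y - 1) * (#{C ∈ 𝓑 | p ∈ C} - 1) = (#B - 1) * (lam - 1) := by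
  have card_inter_sub_one : ∀ C ∈ {C ∈ 𝓑 | p ∈ C}.erase B, #(B ∩ C) - 1 = y - 1 := by
    intro C hC
    obtain ⟨hCB, hC⟩ := mem_erase.mp hC
    obtain ⟨hC𝓑, hpC⟩ := mem_filter.mp hC
    rw [hinter C hC𝓑 hpC hCB]
  have card_pair_blocks_sub_one : ∀ q ∈ B.erase p, #{C ∈ 𝓑 | p ∈ C ∧ q ∈ C} - 1 = lam - 1 := by
    intro q hq
    rw [hpair q (mem_of_mem_erase hq) (ne_of_mem_erase hq)]
  calc
    (y - 1) * (#{C ∈ 𝓑 | p ∈ C} - 1)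
      = ∑ C ∈ {C ∈ 𝓑 | p ∈ C}.erase B, (#(B ∩ C) - 1) := by
        rw [sum_const_nat card_inter_sub_one, card_erase_of_mem (mem_filter.mpr ⟨hB, hp⟩), mul_comm]
    _ = ∑ q ∈ B.erase p, (#{C ∈ 𝓑 | p ∈ C ∧ q ∈ C} - 1) :=
        sum_card_inter_sub_one_eq_sum_card_filter_sub_one hB hp
    _ = (#B - 1) * (lam - 1) := by
        rw [sum_const_nat card_pair_blocks_sub_one, card_erase_of_mem hp]

end Flags

/-- For a non-trivial quasi-symmetric 2-(v,k,λ) design with intersection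
numbers `0` and `y ≥ 2`: `(y−1)(r−1) = (k−1)(λ−1)`. -/
theorem stmt_5 {P : Type*} [Fintype P] [DecidableEq P] {v k lam r y : ℕ}
    (D : TwoDesign P v k lam)
    (hnt : 2 < k ∧ k < v - 1)
    (hr : ∀ p : P, (D.blocks.filter fun B => p ∈ B).card = r)
    (hy : 2 ≤ y)
    (hqs : QuasiSymmetricZero D.blocks y) :
    (y - 1) * (r - 1) = (k - 1) * (lam - 1) := by
  obtain ⟨B, hB, -⟩ := hqs.2.1
  have hk : B.card = k := D.block_card B hB
  obtain ⟨p, hp⟩ : B.Nonempty := Finset.card_pos.mp (by omega)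
  simpa only [hk, hr p] using stmt_5_general hB hp (fun q _ hqp ↦ D.pair_blocks p q hqp.symm)
    fun C hC hpC hCB ↦ hqs.card_inter_eq hB hC hCB.symm hp hpC
end

section
/- Let D be a non-trivial quasi-symmetric 2-(v,k,λ) design with block intersection numbers x = 0 and y ≥ 2, with replication number r. Then y divides k and y divides r − λ. -/
open Finset

section SetFamily

variable {P : Type*} [DecidableEq P] {𝓑 : Finset (Finset P)} {r lam k y : ℕ}

lemma sum_card_inter_nsmul {M : Type*} [AddCommMonoid M] (𝓑 : Finset (Finset P)) (S : Finset P)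
    (c : Finset P → M) :
    ∑ B ∈ 𝓑, #(S ∩ B) • c B = ∑ p ∈ S, ∑ B ∈ 𝓑 with p ∈ B, c B := by
  simp only [sum_filter]
  rw [sum_comm]
  refine sum_congr rfl fun B _ => ?_
  rw [← sum_filter, sum_const, filter_mem_eq_inter]

lemma sum_card_inter_filter_mem_of_notMem {p : P}
    (hpair : ∀ q, p ≠ q → #{B ∈ 𝓑 | p ∈ B ∧ q ∈ B} = lam) {S : Finset P} (hp : p ∉ S) :
    ∑ B ∈ 𝓑 with p ∈ B, #(S ∩ B) = lam * #S := by
  rw [sum_card_inter (n := lam), mul_comm]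
  intro q hq
  rw [filter_filter, hpair q (ne_of_mem_of_not_mem hq hp).symm]

lemma sum_card_inter_filter_mem_of_mem {p : P} (hr : #{B ∈ 𝓑 | p ∈ B} = r)
    (hpair : ∀ q, p ≠ q → #{B ∈ 𝓑 | p ∈ B ∧ q ∈ B} = lam) {S : Finset P} (hp : p ∈ S) :
    (∑ B ∈ 𝓑 with p ∈ B, #(S ∩ B)) + lam = lam * #S + r := by
  have hcard : ∀ B ∈ 𝓑.filter (p ∈ ·), #(S ∩ B) = #(S.erase p ∩ B) + 1 := by
    intro B hB
    rw [erase_inter, card_erase_add_one (mem_inter.2 ⟨hp, (mem_filter.1 hB).2⟩)]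
  rw [sum_congr rfl hcard, sum_add_distrib,
    sum_card_inter_filter_mem_of_notMem hpair (notMem_erase p S), sum_const, hr,
    ← card_erase_add_one hp]
  ring

lemma exists_ne_zero_sum_filter_mem_eq_zero (hr : ∀ p, #{B ∈ 𝓑 | p ∈ B} = r)
    (hpair : ∀ p q, p ≠ q → #{B ∈ 𝓑 | p ∈ B ∧ q ∈ B} = lam) {A C : Finset P} (hA : A ∈ 𝓑)
    (hAC : A ≠ C) (hne : r * #(A ∩ C) ≠ lam * #A) :
    ∃ c : Finset P → ℤ, c C ≠ 0 ∧ ∀ p, ∑ B ∈ 𝓑 with p ∈ B, c B = 0 := by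
  refine ⟨fun B => r * #(A ∩ B) - lam * #A - if A = B then (r : ℤ) * (r - lam) else 0, ?_,
    fun p => ?_⟩
  · simp only [if_neg hAC, sub_zero, sub_ne_zero]
    exact_mod_cast hne
  · rw [sum_sub_distrib, sum_sub_distrib, ← mul_sum, sum_const, hr, nsmul_eq_mul, sum_ite_eq]
    simp only [mem_filter, hA, true_and]
    by_cases hp : p ∈ A
    · have hsum : (∑ B ∈ 𝓑 with p ∈ B, (#(A ∩ B) : ℤ)) + lam = lam * #A + r :=
        mod_cast sum_card_inter_filter_mem_of_mem (hr p) (hpair p) hp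
      rw [if_pos hp]
      linear_combination (r : ℤ) * hsum
    · have hsum : ∑ B ∈ 𝓑 with p ∈ B, (#(A ∩ B) : ℤ) = lam * #A :=
        mod_cast sum_card_inter_filter_mem_of_notMem (hpair p) hp
      rw [if_neg hp]
      linear_combination (r : ℤ) * hsum

lemma dvd_of_sum_filter_mem_eq_zero (hk : (𝓑 : Set (Finset P)).Sized k)
    (hy : (𝓑 : Set (Finset P)).Pairwise fun B C => y ∣ #(B ∩ C)) {c : Finset P → ℤ}
    (hc : ∀ p, ∑ B ∈ 𝓑 with p ∈ B, c B = 0) {A : Finset P} (hA : A ∈ 𝓑) (hcA : c A ≠ 0) :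
    y ∣ k := by
  have hgcd : 𝓑.gcd c ≠ 0 := fun h => hcA (Finset.gcd_eq_zero_iff.1 h A hA)
  have hdvd : ∀ C ∈ 𝓑, (y : ℤ) * 𝓑.gcd c ∣ k * c C := by
    intro C hC
    have hsum : (k : ℤ) * c C + ∑ B ∈ 𝓑.erase C, (#(C ∩ B) : ℤ) * c B = 0 := by
      have hpaired := sum_card_inter_nsmul 𝓑 C c
      simp only [hc, sum_const_zero, nsmul_eq_mul] at hpaired
      rwa [← add_sum_erase _ _ hC, inter_self, hk hC] at hpaired
    rw [eq_neg_of_add_eq_zero_left hsum, dvd_neg]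
    refine dvd_sum fun B hB => ?_
    obtain ⟨hBC, hB⟩ := mem_erase.1 hB
    exact mul_dvd_mul (Int.natCast_dvd_natCast.2 (hy hC hB hBC.symm)) (Finset.gcd_dvd hB)
  have hdvd_gcd : (y : ℤ) * 𝓑.gcd c ∣ k * 𝓑.gcd c := by
    simpa only [Finset.gcd_mul_left, Int.normalize_coe_nat] using Finset.dvd_gcd hdvd
  exact Int.natCast_dvd_natCast.1 ((mul_dvd_mul_iff_right hgcd).1 hdvd_gcd)

lemma dvd_replication_sub {p : P} (hr : #{B ∈ 𝓑 | p ∈ B} = r)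
    (hpair : ∀ q, p ≠ q → #{B ∈ 𝓑 | p ∈ B ∧ q ∈ B} = lam) {S : Finset P} (hp : p ∈ S)
    (hS : y ∣ #S) (hy : ∀ B ∈ 𝓑, p ∈ B → y ∣ #(S ∩ B)) : y ∣ r - lam := by
  have hsum := sum_card_inter_filter_mem_of_mem hr hpair hp
  have hdvd : y ∣ ∑ B ∈ 𝓑 with p ∈ B, #(S ∩ B) :=
    dvd_sum fun B hB => hy B (mem_filter.1 hB).1 (mem_filter.1 hB).2
  rw [show r - lam = (∑ B ∈ 𝓑 with p ∈ B, #(S ∩ B)) - lam * #S by omega]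
  exact Nat.dvd_sub hdvd (hS.mul_left lam)

end SetFamily

-- `hne` excludes the symmetric designs, where any two blocks meet in `lam = lam * k / r` points.
theorem stmt_7_general {P : Type*} [Fintype P] [DecidableEq P] {v k lam r y : ℕ}
    (D : TwoDesign P v k lam) (hr : ∀ p : P, #{B ∈ D.blocks | p ∈ B} = r)
    (hy : (D.blocks : Set (Finset P)).Pairwise fun B C => y ∣ #(B ∩ C))
    (hne : ∃ A ∈ D.blocks, ∃ C ∈ D.blocks, A ≠ C ∧ r * #(A ∩ C) ≠ lam * k) :
    y ∣ k ∧ y ∣ r - lam := by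
  obtain ⟨A, hA, C, hC, hAC, hne⟩ := hne
  have hk : (D.blocks : Set (Finset P)).Sized k := D.block_card
  rw [← hk hA] at hne
  obtain ⟨c, hcC, hc⟩ := exists_ne_zero_sum_filter_mem_eq_zero hr D.pair_blocks hA hAC hne
  have hyk : y ∣ k := dvd_of_sum_filter_mem_eq_zero hk hy hc hC hcC
  obtain ⟨p, hp⟩ : A.Nonempty := by
    rw [nonempty_iff_ne_empty]
    rintro rfl
    simp at hne
  have hyA : y ∣ #A := by rwa [hk hA]
  refine ⟨hyk, dvd_replication_sub (hr p) (D.pair_blocks p) hp hyA fun B hB _ => ?_⟩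
  obtain rfl | hAB := eq_or_ne A B
  · rwa [inter_self]
  · exact hy hA hB hAB

/-- For a non-trivial quasi-symmetric 2-(v,k,λ) design with intersection
numbers `0` and `y ≥ 2`: `y ∣ k` and `y ∣ r − λ`. -/
theorem stmt_7 {P : Type*} [Fintype P] [DecidableEq P] {v k lam r y : ℕ}
    (D : TwoDesign P v k lam)
    (hnt : 2 < k ∧ k < v - 1)
    (hr : ∀ p : P, (D.blocks.filter fun B => p ∈ B).card = r)
    (hy : 2 ≤ y)
    (hqs : QuasiSymmetricZero D.blocks y) :
    y ∣ k ∧ y ∣ (r - lam) := by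
  obtain ⟨hinter, ⟨A, hA, C, hC, hAC, hdisj⟩, -⟩ := hqs
  refine stmt_7_general D hr (fun B hB C hC hBC => ?_) ⟨A, hA, C, hC, hAC, ?_⟩
  · rcases hinter B hB C hC hBC with h | h <;> simp [h]
  · rw [hdisj, mul_zero]
    exact (Nat.mul_pos D.lam_pos (by omega)).ne
end

section
/- There do not exist positive integers k and q such that 4 divides k, k divides q³ + 1, and k² − 5k + 13 = 3q³. -/
/-!
Completing the square turns the equation into `(2k - 5)² + 3³ = 3 · 4 · q³`, which is impossible
for `3`-adic reasons: `3` divides `2k - 5`, hence also `q`, and dividing by `9` leaves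
`n² + 3 ≡ 0 [ZMOD 9]`, so that `3 ∣ n` and `9 ∣ 3`.
-/

section PrimeDescent

variable {R : Type*} [CommRing R] [IsDomain R] {p : R}

theorem not_sq_dvd_sq_add_of_prime (hp : Prime p) (x : R) : ¬ p ^ 2 ∣ x ^ 2 + p := by
  intro h
  have hx : p ∣ x :=
    hp.dvd_of_dvd_pow ((dvd_add_left dvd_rfl).mp ((dvd_pow_self p two_ne_zero).trans h))
  have hpp : p ^ 2 ∣ p := (dvd_add_right (pow_dvd_pow_of_dvd hx 2)).mp h
  exact hp.not_isUnit (hp.irreducible.squarefree p (sq p ▸ hpp))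

theorem sq_add_prime_cube_ne_mul_cube (hp : Prime p) {a : R} (ha : ¬ p ∣ a) (x y : R) :
    y ^ 2 + p ^ 3 ≠ p * a * x ^ 3 := by
  intro h
  obtain ⟨n, rfl⟩ : p ∣ y :=
    hp.dvd_of_dvd_pow (n := 2) ⟨a * x ^ 3 - p ^ 2, by linear_combination h⟩
  have hn : p * (n ^ 2 + p) = a * x ^ 3 :=
    mul_left_cancel₀ hp.ne_zero (by linear_combination h)
  obtain ⟨r, rfl⟩ : p ∣ x :=
    hp.dvd_of_dvd_pow ((hp.dvd_or_dvd (Dvd.intro _ hn)).resolve_left ha)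
  have hr : n ^ 2 + p = p ^ 2 * (a * r ^ 3) :=
    mul_left_cancel₀ hp.ne_zero (by linear_combination hn)
  exact not_sq_dvd_sq_add_of_prime hp n (Dvd.intro _ hr.symm)

end PrimeDescent

theorem stmt_15_general (k q : ℤ) : k ^ 2 - 5 * k + 13 ≠ 3 * q ^ 3 := by
  intro h
  have hsq : (2 * k - 5) ^ 2 + 3 ^ 3 = 3 * 4 * q ^ 3 := by linear_combination 4 * h
  exact sq_add_prime_cube_ne_mul_cube Int.prime_three (by norm_num) q (2 * k - 5) hsq

/-- There are no positive integers `k, q` such that `4 ∣ k`,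
`k ∣ q³ + 1` and `k² − 5k + 13 = 3q³`. -/
theorem stmt_15 :
    ¬ ∃ k q : ℤ, 0 < k ∧ 0 < q ∧ 4 ∣ k ∧ k ∣ q ^ 3 + 1 ∧
      k ^ 2 - 5 * k + 13 = 3 * q ^ 3 := by
  rintro ⟨k, q, -, -, -, -, h⟩
  exact stmt_15_general k q h
end

section
/- There do not exist positive integers k and q such that 10 divides k, k divides q³ + 1, and k² − 11k + 91 = 9q³. -/
/-!
Since `(9 + y)³ + (9 - y)³ = 54 (y² + 27)`, a rational point of the elliptic curve `y² + 27 = 4x³`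
gives a solution of the Fermat cubic `a³ + b³ = c³` with `(a, b, c) = (9 + y, 9 - y, 6x)`. By
Fermat's Last Theorem for exponent 3 this solution is trivial, so the affine rational points of the
curve are `(3, ±9)`. The substitution `3y = 2k - 11` turns the equation of the theorem into this
curve, and the two points correspond to `k = 19` and `k = -8`.
-/

theorem sq_add_twentySeven_eq_four_mul_cube_iff {x y : ℚ} :
    y ^ 2 + 27 = 4 * x ^ 3 ↔ x = 3 ∧ (y = 9 ∨ y = -9) := by
  refine ⟨fun h => ?_, by rintro ⟨rfl, rfl | rfl⟩ <;> norm_num⟩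
  have flt : FermatLastTheoremWith ℚ 3 := fermatLastTheoremFor_iff_rat.mp fermatLastTheoremThree
  have fermat_cubic : (9 + y) ^ 3 + (9 - y) ^ 3 = (6 * x) ^ 3 := by linear_combination 54 * h
  have hx : x ≠ 0 := by
    rintro rfl
    linarith [sq_nonneg y]
  have hy : y = 9 ∨ y = -9 := by
    by_contra! hy
    exact flt (9 + y) (9 - y) (6 * x) (fun h₀ => hy.2 (by linarith)) (sub_ne_zero.mpr hy.1.symm)
      (mul_ne_zero (by norm_num) hx) fermat_cubic
  have x_cube : x ^ 3 = 3 ^ 3 := by rcases hy with rfl | rfl <;> linarith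
  exact ⟨(Odd.pow_inj (by decide)).mp x_cube, hy⟩

theorem stmt_16_general {k q : ℚ} :
    k ^ 2 - 11 * k + 91 = 9 * q ^ 3 ↔ q = 3 ∧ (k = 19 ∨ k = -8) := by
  have curve : k ^ 2 - 11 * k + 91 = 9 * q ^ 3 ↔ ((2 * k - 11) / 3) ^ 2 + 27 = 4 * q ^ 3 := by
    constructor <;> intro h <;> linarith
  have k_eq_19 : (2 * k - 11) / 3 = 9 ↔ k = 19 := by constructor <;> intro h <;> linarith
  have k_eq_neg_8 : (2 * k - 11) / 3 = -9 ↔ k = -8 := by constructor <;> intro h <;> linarith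
  rw [curve, sq_add_twentySeven_eq_four_mul_cube_iff, k_eq_19, k_eq_neg_8]

/-- There are no positive integers `k, q` such that `10 ∣ k`,
`k ∣ q³ + 1` and `k² − 11k + 91 = 9q³`. -/
theorem stmt_16 :
    ¬ ∃ k q : ℤ, 0 < k ∧ 0 < q ∧ 10 ∣ k ∧ k ∣ q ^ 3 + 1 ∧
      k ^ 2 - 11 * k + 91 = 9 * q ^ 3 := by
  rintro ⟨k, q, -, -, ten_dvd, -, h⟩
  have hk : k = 19 ∨ k = -8 := mod_cast (stmt_16_general (k := k) (q := q)).mp (mod_cast h) |>.2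
  omega
end

section
/- For every integer q, the greatest common divisor of q¹²(q⁸ − 1)(q⁴ − 1) − 3 and 3q¹²(q⁸ + q⁴ + 1)(q⁶ − 1)(q² − 1) divides 549·(q⁸ + q⁴ + 1). -/
/-!
In terms of `x = q ^ 2`, both numbers are multiples of `x ^ 4 + x ^ 2 + 1`, with cofactors
`P = x ^ 8 - 2 * x ^ 6 + 3 * x ^ 2 - 3` and `3 * x ^ 6 * (x - 1) ^ 2 * (x ^ 2 + x + 1)`.
Modulo `P`, the factors `3`, `x ^ 6`, `(x - 1) ^ 2` and `x ^ 2 + x + 1` of the second cofactor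
divide `3`, `3`, `1` and `61` respectively, so it divides `3 * 3 * 1 * 61 = 549` modulo `P`.
-/

section

variable {R : Type*} [CommRing R]

lemma mul_mem_span_pair_mul {p a b m n : R} (hm : m ∈ Ideal.span {p, a})
    (hn : n ∈ Ideal.span {p, b}) : m * n ∈ Ideal.span {p, a * b} := by
  obtain ⟨s, t, rfl⟩ := Ideal.mem_span_pair.1 hm
  obtain ⟨u, v, rfl⟩ := Ideal.mem_span_pair.1 hn
  exact Ideal.mem_span_pair.2 ⟨s * (u * p + v * b) + t * a * u, t * v, by ring⟩

lemma mul_mem_span_mul_pair {a b n : R} (c : R) (hn : n ∈ Ideal.span {a, b}) :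
    c * n ∈ Ideal.span {c * a, c * b} := by
  simpa only [Ideal.span_mul_span', Set.singleton_mul, Set.image_pair] using
    Ideal.mul_mem_mul (Ideal.mem_span_singleton_self c) hn

/-- The cofactor of `x ^ 4 + x ^ 2 + 1` in `3 * (v - 1)`, where `x = q ^ 2` and `v` is the number of
points of the design. -/
def pointCofactor (x : R) : R :=
  x ^ 8 - 2 * x ^ 6 + 3 * x ^ 2 - 3

lemma mul_pointCofactor (x : R) :
    (x ^ 4 + x ^ 2 + 1) * pointCofactor x = x ^ 6 * (x ^ 4 - 1) * (x ^ 2 - 1) - 3 := by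
  rw [pointCofactor]
  ring

/-- The cofactor of `x ^ 4 + x ^ 2 + 1` in the order of the point stabilizer, where `x = q ^ 2`. -/
def stabilizerCofactor (x : R) : R :=
  3 * (x ^ 6 * ((x - 1) ^ 2 * (x ^ 2 + x + 1)))

lemma mul_stabilizerCofactor (x : R) :
    (x ^ 4 + x ^ 2 + 1) * stabilizerCofactor x =
      3 * x ^ 6 * (x ^ 4 + x ^ 2 + 1) * (x ^ 3 - 1) * (x - 1) := by
  rw [stabilizerCofactor]
  ring

lemma three_mem_span_pointCofactor_pow_six (x : R) :
    3 ∈ Ideal.span {pointCofactor x, x ^ 6} :=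
  Ideal.mem_span_pair.2 ⟨-(x ^ 4 + x ^ 2 + 1), (x ^ 4 - 1) * (x ^ 2 - 1), by
    linear_combination -mul_pointCofactor x⟩

lemma isCoprime_pointCofactor_sub_one_sq (x : R) :
    IsCoprime (pointCofactor x) ((x - 1) ^ 2) := by
  have taylor : pointCofactor x =
      2 * (x - 1) - 1 + (x - 1) ^ 2 * (x ^ 4 * (x + 1) ^ 2 - x * (x + 2)) := by
    rw [pointCofactor]
    ring
  have inverse : -(2 * (x - 1) + 1) * (2 * (x - 1) - 1) + 4 * (x - 1) ^ 2 = 1 := by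
    ring
  exact ⟨-(2 * (x - 1) + 1),
    (2 * (x - 1) + 1) * (x ^ 4 * (x + 1) ^ 2 - x * (x + 2)) + 4, by
      linear_combination -(2 * (x - 1) + 1) * taylor + inverse⟩

lemma sixtyOne_mem_span_pointCofactor_sq_add_self_add_one (x : R) :
    61 ∈ Ideal.span {pointCofactor x, x ^ 2 + x + 1} := by
  have reduction : pointCofactor x =
      4 * x ^ 2 - 5 + (x ^ 2 + x + 1) * ((x - 1) * (x ^ 3 + 1) * (x ^ 2 - 2)) := by
    rw [pointCofactor]
    ring
  -- For a primitive cube root of unity `ω`, the conjugate of `4 * ω ^ 2 - 5` is `4 * ω - 5`.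
  have norm : (4 * x - 5) * (4 * x ^ 2 - 5) = 61 + (x ^ 2 + x + 1) * (16 * (x - 1) - 20) := by
    ring
  exact Ideal.mem_span_pair.2 ⟨4 * x - 5,
    -((4 * x - 5) * ((x - 1) * (x ^ 3 + 1) * (x ^ 2 - 2)) + (16 * (x - 1) - 20)), by
      linear_combination (4 * x - 5) * reduction + norm⟩

lemma fiveHundredFortyNine_mem_span_pointCofactor_stabilizerCofactor (x : R) :
    549 ∈ Ideal.span {pointCofactor x, stabilizerCofactor x} := by
  have h_three : (3 : R) ∈ Ideal.span {pointCofactor x, 3} :=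
    Ideal.mem_span_pair.2 ⟨0, 1, by ring⟩
  have h_pow := three_mem_span_pointCofactor_pow_six x
  have h_sq : 1 ∈ Ideal.span {pointCofactor x, (x - 1) ^ 2} :=
    Ideal.mem_span_pair.2 (isCoprime_pointCofactor_sub_one_sq x)
  have h_quad := sixtyOne_mem_span_pointCofactor_sq_add_self_add_one x
  have factorization : (549 : R) = 3 * (3 * (1 * 61)) := by norm_num
  rw [factorization, stabilizerCofactor]
  exact mul_mem_span_pair_mul h_three
    (mul_mem_span_pair_mul h_pow (mul_mem_span_pair_mul h_sq h_quad))

theorem stmt_17_general (x : R) :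
    549 * (x ^ 4 + x ^ 2 + 1) ∈ Ideal.span
      {x ^ 6 * (x ^ 4 - 1) * (x ^ 2 - 1) - 3,
        3 * x ^ 6 * (x ^ 4 + x ^ 2 + 1) * (x ^ 3 - 1) * (x - 1)} := by
  rw [mul_comm 549, ← mul_pointCofactor, ← mul_stabilizerCofactor]
  exact mul_mem_span_mul_pair _
    (fiveHundredFortyNine_mem_span_pointCofactor_stabilizerCofactor x)

end

/-- For every integer `q`, the gcd of `q¹²(q⁸ − 1)(q⁴ − 1) − 3` and
`3q¹²(q⁸ + q⁴ + 1)(q⁶ − 1)(q² − 1)` divides `549(q⁸ + q⁴ + 1)`. -/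
theorem stmt_17 (q : ℤ) :
    (Int.gcd (q ^ 12 * (q ^ 8 - 1) * (q ^ 4 - 1) - 3)
      (3 * q ^ 12 * (q ^ 8 + q ^ 4 + 1) * (q ^ 6 - 1) * (q ^ 2 - 1)) : ℤ) ∣
      549 * (q ^ 8 + q ^ 4 + 1) := by
  rw [Int.coe_gcd, ← Ideal.mem_span_singleton, span_gcd]
  simpa only [← pow_mul, Nat.reduceMul] using (stmt_17_general (q ^ 2) :)
end
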